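/- Let F₀ be the affine curve 1 + z₁³ + z₂³ = 0 in ℂ² (an affine chart of the Fermat cubic F: z₀³ + z₁³ + z₂³ = 0 in ℙ²), with the order-3 automorphism σ₀: (z₁,z₂) ↦ (ω²·z₁, ω²·z₂), and let F₁ be the affine curve x³ = t(t+1) in ℂ², with the order-3 automorphism σ₁: (t,x) ↦ (t, ω·x). Then F₀ and F₁ are G-birationally equivalent for G = ℤ/3ℤ: there is a ℂ-algebra isomorphism φ: Frac(ℂ[z₁,z₂]/(1 + z₁³ + z₂³)) → Frac(ℂ[t,x]/(x³ − t(t+1))) of function fields satisfying φ ∘ σ̂₀ = σ̂₁ ∘ φ, where σ̂₀ and σ̂₁ denote the field automorphisms induced by σ₀ and σ₁. -/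

import Mathlib

/-!
Formalization conventions.

* The function field of an affine variety whose coordinate ring `ℂ[x₁,…,xₙ]/I` is an
  integral domain is formalized as `FractionRing` of that coordinate ring (for the total
  rings of fractions of the rings appearing here this is the function field).
* Two such varieties are birationally equivalent iff their function fields are
  isomorphic as `ℂ`-algebras.
-/

noncomputable section
open MvPolynomial

/-- `ω = exp(2πi/3) ∈ ℂ`, a fixed primitive cube root of unity. -/
def ω : ℂ := Complex.exp (2 * Real.pi * Complex.I / 3)

/-- Coordinate ring of the affine hypersurface `f = 0` in `ℂⁿ`. -/
abbrev HSurf {n : ℕ} (f : MvPolynomial (Fin n) ℂ) : Type :=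
  MvPolynomial (Fin n) ℂ ⧸ Ideal.span {f}

/-- Coordinate ring of the affine variety `f = g = 0` in `ℂⁿ`. -/
abbrev HSurf2 {n : ℕ} (f g : MvPolynomial (Fin n) ℂ) : Type :=
  MvPolynomial (Fin n) ℂ ⧸ Ideal.span {f, g}

/-- The image of a polynomial `p` in the function field of the hypersurface `f = 0`. -/
def cls {n : ℕ} (f : MvPolynomial (Fin n) ℂ) (p : MvPolynomial (Fin n) ℂ) :
    FractionRing (HSurf f) :=
  algebraMap (HSurf f) (FractionRing (HSurf f)) (Ideal.Quotient.mk _ p)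

/-- The image of a polynomial `p` in the function field of the variety `f = g = 0`. -/
def cls2 {n : ℕ} (f g : MvPolynomial (Fin n) ℂ) (p : MvPolynomial (Fin n) ℂ) :
    FractionRing (HSurf2 f g) :=
  algebraMap (HSurf2 f g) (FractionRing (HSurf2 f g)) (Ideal.Quotient.mk _ p)

/-- Defining polynomial of the affine Fermat cubic `F₀ : 1 + z₁³ + z₂³ = 0` in `ℂ²`
(`z₁ = X 0`, `z₂ = X 1`), an affine chart of the Fermat cubic
`F : z₀³ + z₁³ + z₂³ = 0` in `ℙ²`. -/
def pF₀ : MvPolynomial (Fin 2) ℂ := 1 + X 0 ^ 3 + X 1 ^ 3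

/-- Defining polynomial of the affine curve `F₁ : x³ = t(t+1)` in `ℂ²`
(`t = X 0`, `x = X 1`). -/
def pF₁ : MvPolynomial (Fin 2) ℂ := X 1 ^ 3 - X 0 * (X 0 + 1)

theorem omega_rel : ω ^ 2 + ω + 1 = 0 := by
  have hp : IsPrimitiveRoot ω 3 := by
    have := Complex.isPrimitiveRoot_exp 3 (by norm_num)
    simpa [ω] using this
  have := hp.geom_sum_eq_zero (by norm_num)
  simp [Finset.sum_range_succ] at this
  linear_combination this

theorem omega_ne_one : ω ≠ 1 := by
  intro h
  have := omega_rel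
  rw [h] at this
  norm_num at this

theorem no_cube (c : MvPolynomial (Fin 1) ℂ) (a : Fin 1 → ℂ) (h0 : eval a c = 0)
    (h1 : eval a (pderiv 0 c) ≠ 0) :
    Irreducible (Polynomial.X ^ 3 + Polynomial.C c) := by
  have hm : (Polynomial.X ^ 3 + Polynomial.C c).Monic := Polynomial.monic_X_pow_add_C c (by norm_num)
  have hd : (Polynomial.X ^ 3 + Polynomial.C c).natDegree = 3 := Polynomial.natDegree_X_pow_add_C
  rw [hm.irreducible_iff_roots_eq_zero_of_degree_le_three (by omega) (by omega)]
  rw [Multiset.eq_zero_iff_forall_notMem]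
  intro r hr
  have hr := (Polynomial.mem_roots'.1 hr).2
  simp [Polynomial.IsRoot] at hr
  have e0 := congrArg (eval a) hr
  simp [h0] at e0
  have e1 := congrArg (fun p => eval a (pderiv 0 p)) hr
  simp [Derivation.leibniz_pow, e0] at e1
  exact h1 e1

theorem irr0 : Irreducible pF₀ := by
  rw [← MulEquiv.irreducible_iff (finSuccEquiv ℂ 1)]
  have : finSuccEquiv ℂ 1 pF₀ = Polynomial.X ^ 3 + Polynomial.C (1 + X 0 ^ 3) := by
    have h1 : finSuccEquiv ℂ 1 (X 1) = Polynomial.C (X 0) := finSuccEquiv_X_succ (j := 0)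
    simp only [pF₀, map_add, map_one, map_pow, finSuccEquiv_X_zero, h1]
    ring
  rw [this]
  apply no_cube _ (fun _ => -1)
  · norm_num
  · simp [Derivation.leibniz_pow]

theorem irr1 : Irreducible pF₁ := by
  rw [← MulEquiv.irreducible_iff (renameEquiv ℂ (Equiv.swap (0 : Fin 2) 1)),
    ← MulEquiv.irreducible_iff (finSuccEquiv ℂ 1)]
  have : finSuccEquiv ℂ 1 (renameEquiv ℂ (Equiv.swap (0 : Fin 2) 1) pF₁)
      = Polynomial.X ^ 3 + Polynomial.C (-(X 0 * (X 0 + 1))) := by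
    have h1 : finSuccEquiv ℂ 1 (X 1) = Polynomial.C (X 0) := finSuccEquiv_X_succ (j := 0)
    simp [pF₁, finSuccEquiv_X_zero, h1]
    ring
  rw [this]
  apply no_cube _ (fun _ => 0)
  · norm_num
  · simp

theorem dom_of_irr {f : MvPolynomial (Fin 2) ℂ} (h : Irreducible f) : IsDomain (HSurf f) := by
  have : (Ideal.span {f}).IsPrime := (Ideal.span_singleton_prime h.ne_zero).2 h.prime
  exact Ideal.Quotient.isDomain _

instance dom0 : IsDomain (HSurf pF₀) := dom_of_irr irr0
instance dom1 : IsDomain (HSurf pF₁) := dom_of_irr irr1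

/-- `K` together with `π` behaves as the function field of the plane curve `f = 0`. -/
structure IsFF (f : MvPolynomial (Fin 2) ℂ) {K : Type} [Field K] [Algebra ℂ K]
    (π : MvPolynomial (Fin 2) ℂ →ₐ[ℂ] K) : Prop where
  zero : π f = 0
  ker : ∀ p, π p = 0 → f ∣ p
  hext : ∀ {L : Type} [Field L] [Algebra ℂ L] (a b : K →ₐ[ℂ] L),
    a (π (X 0)) = b (π (X 0)) → a (π (X 1)) = b (π (X 1)) → a = b
  lift : ∀ {L : Type} [Field L] [Algebra ℂ L] (ρ : MvPolynomial (Fin 2) ℂ →ₐ[ℂ] L),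
    ρ f = 0 → (∀ p, ρ p = 0 → f ∣ p) → ∃ φ : K →ₐ[ℂ] L, ∀ p, φ (π p) = ρ p

/-- The class map as an algebra homomorphism. -/
def clsHom (f : MvPolynomial (Fin 2) ℂ) :
    MvPolynomial (Fin 2) ℂ →ₐ[ℂ] FractionRing (HSurf f) :=
  (IsScalarTower.toAlgHom ℂ (HSurf f) (FractionRing (HSurf f))).comp
      (Ideal.Quotient.mkₐ ℂ (Ideal.span {f}))

theorem isFF_clsHom (f : MvPolynomial (Fin 2) ℂ) [IsDomain (HSurf f)] : IsFF f (clsHom f) where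
  zero := by
    have : (Ideal.Quotient.mk (Ideal.span {f}) f) = 0 :=
      Ideal.Quotient.eq_zero_iff_mem.2 (Ideal.mem_span_singleton_self f)
    change algebraMap (HSurf f) (FractionRing (HSurf f)) (Ideal.Quotient.mk (Ideal.span {f}) f) = 0
    rw [this, map_zero]
  ker p h := by
    have h2 : (Ideal.Quotient.mk (Ideal.span {f}) p) = 0 :=
      (IsFractionRing.injective (HSurf f) (FractionRing (HSurf f))) (by rw [map_zero]; exact h)
    exact Ideal.mem_span_singleton.1 (Ideal.Quotient.eq_zero_iff_mem.1 h2)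
  hext := by
    intro L _ _ a b h0 h1
    have key : a.comp (clsHom f) = b.comp (clsHom f) := by
      apply MvPolynomial.algHom_ext
      intro i
      fin_cases i
      · exact h0
      · exact h1
    have : (a : FractionRing (HSurf f) →+* L) = b := by
      apply IsLocalization.ringHom_ext (nonZeroDivisors (HSurf f))
      apply RingHom.ext
      intro y
      obtain ⟨p, rfl⟩ := Ideal.Quotient.mk_surjective y
      exact DFunLike.congr_fun key p
    apply AlgHom.ext
    intro z
    exact DFunLike.congr_fun this z
  lift := by
    intro L _ _ ρ h0 hk
    have hker : ∀ a ∈ Ideal.span {f}, ρ a = 0 := by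
      intro a ha
      obtain ⟨b, rfl⟩ := Ideal.mem_span_singleton.1 ha
      rw [map_mul, h0, zero_mul]
    have hinj : Function.Injective (Ideal.Quotient.liftₐ (Ideal.span {f}) ρ hker) := by
      rw [injective_iff_map_eq_zero]
      intro a
      obtain ⟨p, rfl⟩ := Ideal.Quotient.mk_surjective a
      intro h
      exact Ideal.Quotient.eq_zero_iff_mem.2 (Ideal.mem_span_singleton.2 (hk p h))
    refine ⟨IsFractionRing.liftAlgHom hinj, fun p => ?_⟩
    exact IsFractionRing.lift_algebraMap (K := FractionRing (HSurf f)) hinj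
      (Ideal.Quotient.mk (Ideal.span {f}) p)

section
variable {K L : Type} [Field K] [Algebra ℂ K] [Field L] [Algebra ℂ L]

theorem IsFF.ne_zero {f : MvPolynomial (Fin 2) ℂ} {π : MvPolynomial (Fin 2) ℂ →ₐ[ℂ] K}
    (hπ : IsFF f π) (v : Fin 2 → ℂ) (h : aeval v f = 0) (p : MvPolynomial (Fin 2) ℂ)
    (hp : aeval v p ≠ 0) : π p ≠ 0 := by
  intro h0
  obtain ⟨q, rfl⟩ := hπ.ker p h0
  rw [map_mul, h, zero_mul] at hp
  exact hp rfl

theorem IsFF.exists_hom {f g : MvPolynomial (Fin 2) ℂ} {π : MvPolynomial (Fin 2) ℂ →ₐ[ℂ] K}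
    {ρ : MvPolynomial (Fin 2) ℂ →ₐ[ℂ] L} (hπ : IsFF f π) (hρ : IsFF g ρ)
    (v0 v1 : L) (hv : aeval ![v0, v1] f = 0)
    (w0 w1 : K) (hw : aeval ![w0, w1] g = 0)
    (d : MvPolynomial (Fin 2) ℂ) (hd : aeval ![w0, w1] d ≠ 0)
    (q0 q1 : MvPolynomial (Fin 2) ℂ)
    (h10 : ρ d * v0 = ρ q0) (h11 : ρ d * v1 = ρ q1)
    (h20 : aeval ![w0, w1] d * π (X 0) = aeval ![w0, w1] q0)
    (h21 : aeval ![w0, w1] d * π (X 1) = aeval ![w0, w1] q1) :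
    ∃ φ : K →ₐ[ℂ] L, φ (π (X 0)) = v0 ∧ φ (π (X 1)) = v1 := by
  have key : ∀ p : MvPolynomial (Fin 2) ℂ, ∃ (N : ℕ) (r : MvPolynomial (Fin 2) ℂ),
      ρ d ^ N * aeval ![v0, v1] p = ρ r ∧ aeval ![w0, w1] d ^ N * π p = aeval ![w0, w1] r := by
    intro p
    induction p using MvPolynomial.induction_on with
    | C a =>
      refine ⟨0, C a, ?_, ?_⟩
      · simp only [pow_zero, one_mul, aeval_C]
        exact (ρ.commutes a).symm
      · simp only [pow_zero, one_mul, aeval_C]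
        exact π.commutes a
    | add p p' hp hp' =>
      obtain ⟨N, r, a1, a2⟩ := hp
      obtain ⟨M, s, b1, b2⟩ := hp'
      refine ⟨N + M, d ^ M * r + d ^ N * s, ?_, ?_⟩
      · rw [map_add, map_add, map_mul, map_mul, ← a1, ← b1, map_pow, map_pow]; ring
      · rw [map_add, map_add, map_mul, map_mul, ← a2, ← b2, map_pow, map_pow]; ring
    | mul_X p i hp =>
      obtain ⟨N, r, a1, a2⟩ := hp
      refine ⟨N + 1, r * ![q0, q1] i, ?_, ?_⟩
      · have h1 : ρ d * ![v0, v1] i = ρ (![q0, q1] i) := by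
          fin_cases i
          · exact h10
          · exact h11
        rw [map_mul, map_mul, ← a1, ← h1, aeval_X]; ring
      · have h2 : aeval ![w0, w1] d * π (X i) = aeval ![w0, w1] (![q0, q1] i) := by
          fin_cases i
          · exact h20
          · exact h21
        rw [map_mul, map_mul, ← a2, ← h2]; ring
  obtain ⟨φ, hφ⟩ := hπ.lift (aeval ![v0, v1]) hv (by
    intro p h
    obtain ⟨N, r, a1, a2⟩ := key p
    rw [h, mul_zero] at a1
    obtain ⟨r', rfl⟩ := hρ.ker r a1.symm
    rw [map_mul, hw, zero_mul] at a2
    exact hπ.ker p ((mul_eq_zero.1 a2).resolve_left (pow_ne_zero _ hd)))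
  refine ⟨φ, ?_, ?_⟩
  · rw [hφ, aeval_X]; rfl
  · rw [hφ, aeval_X]; rfl

theorem main_abs {π : MvPolynomial (Fin 2) ℂ →ₐ[ℂ] K} {ρ : MvPolynomial (Fin 2) ℂ →ₐ[ℂ] L}
    (hπ : IsFF pF₀ π) (hρ : IsFF pF₁ ρ) :
    ∃ (φ : K ≃ₐ[ℂ] L) (σ₀ : K ≃ₐ[ℂ] K) (σ₁ : L ≃ₐ[ℂ] L),
      orderOf σ₀ = 3 ∧
      σ₀ (π (X 0)) = (ω ^ 2 : ℂ) • π (X 0) ∧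
      σ₀ (π (X 1)) = (ω ^ 2 : ℂ) • π (X 1) ∧
      orderOf σ₁ = 3 ∧
      σ₁ (ρ (X 0)) = ρ (X 0) ∧
      σ₁ (ρ (X 1)) = (ω : ℂ) • ρ (X 1) ∧
      ∀ k, φ (σ₀ k) = σ₁ (φ k) := by
  have hω := omega_rel
  have hc1 : (algebraMap ℂ L ω) ^ 2 + algebraMap ℂ L ω + 1 = 0 := by
    simpa using congrArg (algebraMap ℂ L) hω
  have hc0 : (algebraMap ℂ K ω) ^ 2 + algebraMap ℂ K ω + 1 = 0 := by
    simpa using congrArg (algebraMap ℂ K) hω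
  have he1 : 3 * (algebraMap ℂ L (1 / 3)) = 1 := by
    rw [← map_ofNat (algebraMap ℂ L) 3, ← map_mul]; norm_num
  have he0 : 3 * (algebraMap ℂ K (1 / 3)) = 1 := by
    rw [← map_ofNat (algebraMap ℂ K) 3, ← map_mul]; norm_num
  have hx : ρ (X 1) ≠ 0 := by
    apply hρ.ne_zero ![ω, -1]
    · simp [pF₁]; linear_combination -hω
    · simp
  have hd : π (X 0 + X 1) ≠ 0 := by
    apply hπ.ne_zero ![-1, 0]
    · simp [pF₀]; norm_num
    · simp
  have hr1 : ρ (X 1) ^ 3 - ρ (X 0) * (ρ (X 0) + 1) = 0 := by simpa [pF₁] using hρ.zero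
  have hr0 : 1 + π (X 0) ^ 3 + π (X 1) ^ 3 = 0 := by simpa [pF₀] using hπ.zero
  rw [map_add] at hd
  have hC1 : ∀ a, ρ (C a) = algebraMap ℂ L a := fun a => AlgHom.commutes ρ a
  have hC0 : ∀ a, π (C a) = algebraMap ℂ K a := fun a => AlgHom.commutes π a
  have hCe := hC1 (1 / 3)
  have hCc := hC1 ω
  have hCb := hC0 ω
  generalize hc : algebraMap ℂ L ω = c at *
  generalize hb : algebraMap ℂ K ω = b at *
  generalize he : algebraMap ℂ L (1 / 3) = e at *
  generalize hg : algebraMap ℂ K (1 / 3) = g at *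
  generalize ht : ρ (X 0) = t at *
  generalize hxx : ρ (X 1) = x at *
  generalize hz : π (X 0) = z at *
  generalize hy : π (X 1) = y at *
  have hc3 : c ^ 3 = 1 := by linear_combination (c - 1) * hc1
  have hb3 : b ^ 3 = 1 := by linear_combination (b - 1) * hc0
  have hcx : c ≠ 0 := by
    intro h
    rw [h] at hc3
    norm_num at hc3
  have hv : aeval ![(c - t) * ((c ^ 2 - c) * e) / x, (t - c ^ 2) * ((c ^ 2 - c) * e) / x] pF₀ = 0 := by
    simp [pF₀]
    field_simp
    grind
  have hw : aeval ![b * (y + b * z) / (z + y), 1 / (z + y)] pF₁ = 0 := by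
    simp [pF₁]
    field_simp
    grind
  have hsum : (c - t) * ((c ^ 2 - c) * e) / x + (t - c ^ 2) * ((c ^ 2 - c) * e) / x = 1 / x := by
    field_simp
    grind
  obtain ⟨φ, φ0, φ1⟩ := hπ.exists_hom hρ _ _ hv _ _ hw (X 1) (by simpa using hd)
    ((C ω - X 0) * ((C ω ^ 2 - C ω) * C (1 / 3)))
    ((X 0 - C ω ^ 2) * ((C ω ^ 2 - C ω) * C (1 / 3)))
    (by
      simp only [map_mul, map_sub, map_pow, hCc, hCe, ht, hxx]
      field_simp)
    (by
      simp only [map_mul, map_sub, map_pow, hCc, hCe, ht, hxx]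
      field_simp)
    (by
      simp only [map_mul, map_sub, map_pow, aeval_X, aeval_C, hb, hg, hz]
      simp
      field_simp
      grind)
    (by
      simp only [map_mul, map_sub, map_pow, aeval_X, aeval_C, hb, hg, hy]
      simp
      field_simp
      grind)
  obtain ⟨φ', ψ0, ψ1⟩ := hρ.exists_hom hπ _ _ hw _ _ hv (X 0 + X 1) (by
      simp [hsum, hx])
    (C ω * (X 1 + C ω * X 0)) 1
    (by
      simp only [map_mul, map_add, hCb, hz, hy]
      field_simp)
    (by
      simp only [map_add, map_one, hz, hy]
      field_simp)
    (by
      simp only [map_mul, map_add, aeval_X, aeval_C, hc, ht]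
      simp [hsum]
      field_simp
      grind)
    (by
      simp only [map_add, map_one, aeval_X, hxx]
      simp [hsum, hx])
  have hs1 : aeval ![t, c * x] pF₁ = 0 := by
    simp [pF₁]
    linear_combination hr1 + x ^ 3 * hc3
  have hs2 : aeval ![t, c ^ 2 * x] pF₁ = 0 := by
    simp [pF₁]
    linear_combination hr1 + x ^ 3 * (c ^ 3 + 1) * hc3
  obtain ⟨s, s0, s1⟩ := hρ.exists_hom hρ _ _ hs1 _ _ hs2 1 (by simp) (X 0) (C ω * X 1)
    (by simp [ht])
    (by simp [hxx, hCc])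
    (by simp [ht])
    (by
      simp [hxx, hc]
      linear_combination -x * hc3)
  obtain ⟨s', s0', s1'⟩ := hρ.exists_hom hρ _ _ hs2 _ _ hs1 1 (by simp) (X 0) (C ω ^ 2 * X 1)
    (by simp [ht])
    (by simp [hxx, hCc])
    (by simp [ht])
    (by
      simp [hxx, hc]
      linear_combination -x * hc3)
  rw [hz] at φ0
  rw [hy] at φ1
  rw [ht] at ψ0 s0 s0'
  rw [hxx] at ψ1 s1 s1'
  have φb : φ b = c := by rw [← hb, ← hc]; exact φ.commutes _
  have ψc : φ' c = b := by rw [← hb, ← hc]; exact φ'.commutes _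
  have ψe : φ' e = g := by rw [← he, ← hg]; exact φ'.commutes _
  have sc : s c = c := by rw [← hc]; exact s.commutes _
  have sc' : s' c = c := by rw [← hc]; exact s'.commutes _
  have se : s e = e := by rw [← he]; exact s.commutes _
  let Φ : K ≃ₐ[ℂ] L :=
    AlgEquiv.ofAlgHom φ φ' (by
      apply hρ.hext
      · simp [ht, ψ0, φ0, φ1, φb]
        simp only [hsum]
        field_simp
        grind
      · simp [hxx, ψ1, φ0, φ1, φb]
        rw [hsum]
        simp) (by
      apply hπ.hext
      · simp [hz, ψ0, φ0, ψ1, ψc, ψe]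
        field_simp
        grind
      · simp [hy, ψ0, φ1, ψ1, ψc, ψe]
        field_simp
        grind)
  let S : L ≃ₐ[ℂ] L :=
    AlgEquiv.ofAlgHom s s' (by
      apply hρ.hext
      · simp [ht, s0, s0']
      · simp [hxx, s1, s1', sc]
        linear_combination x * hc3) (by
      apply hρ.hext
      · simp [ht, s0, s0']
      · simp [hxx, s1, s1', sc']
        linear_combination x * hc3)
  have hΦ : ∀ k, Φ k = φ k := fun _ => rfl
  have hΦ' : ∀ k, Φ.symm k = φ' k := fun _ => rfl
  have hS : ∀ k, S k = s k := fun _ => rfl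
  have hφφ : ∀ k, φ' (φ k) = k := fun k => Φ.symm_apply_apply k
  have hSord : orderOf S = 3 := by
    apply orderOf_eq_prime
    · have : ((S ^ 3 : _ ≃ₐ[ℂ] _) : L →ₐ[ℂ] _) = AlgHom.id ℂ _ := by
        apply hρ.hext
        · simp [pow_succ, ht, hS, s0]
        · simp [pow_succ, hxx, hS, s1, sc]
          linear_combination x * hc3
      ext k
      exact DFunLike.congr_fun this k
    · intro h
      have h2 : S x = x := by rw [h]; rfl
      rw [hS, s1] at h2
      have h3 : c = 1 := mul_right_cancel₀ hx (by rw [h2, one_mul])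
      rw [← hc, ← map_one (algebraMap ℂ (L))] at h3
      exact omega_ne_one ((algebraMap ℂ (L)).injective h3)
  refine ⟨Φ, AlgEquiv.autCongr Φ.symm S, S, ?_, ?_, ?_, hSord, ?_, ?_, ?_⟩
  · rw [← hSord]
    exact MulEquiv.orderOf_eq (AlgEquiv.autCongr Φ.symm) S
  · have : s (φ z) = c ^ 2 * φ z := by
      simp [φ0, s0, s1, sc, se]
      field_simp
      grind
    simp [AlgEquiv.autCongr_apply, hΦ, hΦ', hS, this, hφφ, ψc, Algebra.smul_def, hb]
  · have : s (φ y) = c ^ 2 * φ y := by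
      simp [φ1, s0, s1, sc, se]
      field_simp
      grind
    simp [AlgEquiv.autCongr_apply, hΦ, hΦ', hS, this, hφφ, ψc, Algebra.smul_def, hb]
  · rw [hS, s0]
  · rw [hS, s1, Algebra.smul_def, hc]
  · intro k
    simp [AlgEquiv.autCongr_apply]

end

/-- The curves `F₀` (with the order-3 automorphism
`σ₀ : (z₁,z₂) ↦ (ω²·z₁, ω²·z₂)`) and `F₁` (with the order-3 automorphism
`σ₁ : (t,x) ↦ (t, ω·x)`) are `G`-birationally equivalent for `G = ℤ/3ℤ`: there is a
`ℂ`-algebra isomorphism `φ` of their function fields with `φ ∘ σ̂₀ = σ̂₁ ∘ φ`, where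
`σ̂₀, σ̂₁` are the field automorphisms induced by `σ₀, σ₁`. -/
theorem stmt12 :
    ∃ (φ : FractionRing (HSurf pF₀) ≃ₐ[ℂ] FractionRing (HSurf pF₁))
      (σ₀ : FractionRing (HSurf pF₀) ≃ₐ[ℂ] FractionRing (HSurf pF₀))
      (σ₁ : FractionRing (HSurf pF₁) ≃ₐ[ℂ] FractionRing (HSurf pF₁)),
      orderOf σ₀ = 3 ∧
      σ₀ (cls pF₀ (X 0)) = (ω ^ 2 : ℂ) • cls pF₀ (X 0) ∧
      σ₀ (cls pF₀ (X 1)) = (ω ^ 2 : ℂ) • cls pF₀ (X 1) ∧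
      orderOf σ₁ = 3 ∧
      σ₁ (cls pF₁ (X 0)) = cls pF₁ (X 0) ∧
      σ₁ (cls pF₁ (X 1)) = (ω : ℂ) • cls pF₁ (X 1) ∧
      ∀ k, φ (σ₀ k) = σ₁ (φ k) := by
  exact main_abs (isFF_clsHom pF₀) (isFF_clsHom pF₁)
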